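/- arXiv:math/0101161 — 2 statements merged into one kernel-verified Lean document; each statement's English description precedes it below -/
import Mathlib

section
/- The quintic form P(x) = Σ_c (w_c · x)⁵, the sum over all 27 line classes c of the fifth powers of the linear forms given by the corresponding weights w_c = c + K/3, is a nonzero polynomial function on K^⊥ ⊗ ℂ which is invariant under the Weyl group W(E₆) (i.e., P(s_α x) = P(x) for every root α and every x ∈ K^⊥ ⊗ ℂ), and every homogeneous degree-5 polynomial function on K^⊥ ⊗ ℂ invariant under all the reflections s_α is a scalar multiple of P; thus P = 0 defines Hunt's quintic, the unique W(E₆)-invariant quintic hypersurface in ℙ⁵. -/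
/-!
Statement 8: the quintic `P(x) = Σ_c (w_c · x)⁵` (sum over the 27 line
classes, `w_c = c + K/3`) is a nonzero `W(E₆)`-invariant polynomial function
on `K^⊥ ⊗ ℂ`, and every homogeneous degree-5 polynomial function on
`K^⊥ ⊗ ℂ` invariant under all reflections `s_α` is a scalar multiple of `P`
(Hunt's quintic).
-/

noncomputable section

namespace Stmt8

open MvPolynomial

/-- The bilinear form on `Λ = ℤ⁷`. -/
def dotZ (x y : Fin 7 → ℤ) : ℤ := x 0 * y 0 - ∑ i : Fin 6, x i.succ * y i.succ

/-- The bilinear form on `ℂ⁷`. -/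
def dotC (x y : Fin 7 → ℂ) : ℂ := x 0 * y 0 - ∑ i : Fin 6, x i.succ * y i.succ

/-- The canonical class `K = (−3,1,1,1,1,1,1)`. -/
def K : Fin 7 → ℤ := ![-3, 1, 1, 1, 1, 1, 1]

/-- The canonical class as a complex vector. -/
def KC : Fin 7 → ℂ := fun i => (K i : ℂ)

/-- A line class: `e·e = −1` and `e·K = −1` (there are 27 of them). -/
def IsLine (e : Fin 7 → ℤ) : Prop := dotZ e e = -1 ∧ dotZ e K = -1

/-- A root: `α·α = −2` and `α·K = 0`. -/
def IsRoot (α : Fin 7 → ℤ) : Prop := dotZ α α = -2 ∧ dotZ α K = 0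

/-- The weight `w_c = c + K/3` attached to a line class `c`. -/
def weight (c : Fin 7 → ℤ) : Fin 7 → ℂ := fun i => (c i : ℂ) + KC i / 3

/-- The reflection `s_α` acting on `ℂ⁷`: `s_α(x) = x + (x·α)α`. -/
def reflC (α : Fin 7 → ℤ) (x : Fin 7 → ℂ) : Fin 7 → ℂ :=
  x + dotC x (fun i => (α i : ℂ)) • fun i => (α i : ℂ)

/-- Hunt's quintic function `P(x) = Σ_c (w_c · x)⁵`, summed over all 27 line
classes `c`. -/
def P (x : Fin 7 → ℂ) : ℂ := ∑ᶠ c ∈ {e : Fin 7 → ℤ | IsLine e}, (dotC (weight c) x) ^ 5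

/-!
The argument climbs the chain `D₄ ⊂ D₅ ⊂ E₆`. The group `W(D₄)` contains `-1`, the product of the
reflections in four orthogonal roots, so an invariant of odd degree vanishes on every
`D₄`-subspace of `K^⊥`, that is, on the orthogonal complement of two incident lines. Five of these
subspaces are the hyperplanes `x₀ + xᵢ = 0`, `1 ≤ i ≤ 5`, of the `D₅`-subspace `x₆ = 0`; hence an
invariant quintic restricts there to a multiple of `∏ (x₀ + xᵢ)` and is determined on `x₆ = 0` by
its value at one point. If that value is zero, then by symmetry the quintic vanishes on the six
hyperplanes `xᵢ = 0` of `K^⊥`, and having degree `5 < 6` it is zero on `K^⊥`. Since `P` does not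
vanish at the chosen point, subtracting a multiple of `P` reduces to this case.
-/

/-! ### Polynomials vanishing on coordinate hyperplanes -/

section Substitution

variable {R σ τ : Type*} [CommSemiring R]

theorem eval_smul_of_isHomogeneous {p : MvPolynomial σ R} {n : ℕ} (hp : p.IsHomogeneous n)
    (c : R) (x : σ → R) : eval (c • x) p = c ^ n * eval x p := by
  rw [eval_eq, eval_eq, Finset.mul_sum]
  refine Finset.sum_congr rfl fun m hm => ?_
  simp only [Pi.smul_apply, smul_eq_mul, mul_pow, Finset.prod_mul_distrib,
    Finset.prod_pow_eq_pow_sum, ← hp.degree_eq_sum_deg_support hm]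
  ring

theorem eval_bind₁ (f : τ → MvPolynomial σ R) (p : MvPolynomial τ R) (x : σ → R) :
    eval x (bind₁ f p) = eval (fun i => eval x (f i)) p :=
  eval₂Hom_bind₁ _ _ _ _

theorem exists_isHomogeneous_eval_eq_eval_mulVec [Fintype σ] {p : MvPolynomial τ R} {n : ℕ}
    (hp : p.IsHomogeneous n) (M : Matrix τ σ R) :
    ∃ r : MvPolynomial σ R, r.IsHomogeneous n ∧ ∀ y, eval y r = eval (M.mulVec y) p := by
  refine ⟨bind₁ M.toMvPolynomial p, ?_, fun y => ?_⟩
  · simpa using hp.aeval _ M.toMvPolynomial_isHomogeneous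
  · simp only [eval_bind₁, Matrix.toMvPolynomial_eval_eq_apply]

end Substitution

section CoordinateHyperplanes

variable {R σ : Type*} [CommRing R] [IsDomain R] [Infinite R] {p : MvPolynomial σ R}

theorem X_dvd_of_eval_eq_zero {i : σ} (hp : ∀ x : σ → R, x i = 0 → eval x p = 0) : X i ∣ p := by
  classical
  have hsubst : bind₁ (Function.update X i 0) p = 0 := MvPolynomial.funext fun x => by
    rw [eval_bind₁, map_zero]
    exact hp _ (by simp)
  -- Modulo `X i`, a polynomial agrees with its substitution `X i := 0`.
  have hmod : (Ideal.Quotient.mkₐ R (Ideal.span {X i})).comp (bind₁ (Function.update X i 0)) =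
      Ideal.Quotient.mkₐ R (Ideal.span {(X i : MvPolynomial σ R)}) := by
    ext j
    rcases eq_or_ne j i with rfl | hj
    · simp
    · simp [hj]
  rw [← Ideal.mem_span_singleton, ← Ideal.Quotient.eq_zero_iff_mem]
  simpa [hsubst] using (DFunLike.congr_fun hmod p).symm

theorem one_le_of_mem_support (hp : ∀ (i : σ) (x : σ → R), x i = 0 → eval x p = 0)
    {m : σ →₀ ℕ} (hm : m ∈ p.support) (i : σ) : 1 ≤ m i := by
  classical
  obtain ⟨g, rfl⟩ := X_dvd_of_eval_eq_zero (hp i)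
  by_contra! hmi
  rw [Nat.lt_one_iff] at hmi
  exact mem_support_iff.1 hm (by simp [coeff_X_mul', hmi])

variable [Fintype σ]

theorem eq_zero_of_totalDegree_lt_card (hdeg : p.totalDegree < Fintype.card σ)
    (hp : ∀ (i : σ) (x : σ → R), x i = 0 → eval x p = 0) : p = 0 := by
  by_contra hne
  obtain ⟨m, hm⟩ := support_nonempty.2 hne
  refine hdeg.not_ge ?_
  calc Fintype.card σ = ∑ _i : σ, 1 := by simp
    _ ≤ ∑ i, m i := Finset.sum_le_sum fun i _ => one_le_of_mem_support hp hm i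
    _ = m.sum fun _ e => e := (Finsupp.sum_fintype m (fun _ e => e) fun _ => rfl).symm
    _ ≤ p.totalDegree := le_totalDegree hm

theorem eval_eq_eval_one_mul_prod (hdeg : p.totalDegree ≤ Fintype.card σ)
    (hp : ∀ (i : σ) (x : σ → R), x i = 0 → eval x p = 0) (x : σ → R) :
    eval x p = eval 1 p * ∏ i, x i := by
  have hm_one : ∀ m ∈ p.support, ∀ i, m i = 1 := by
    intro m hm
    have hle : ∑ i, m i ≤ ∑ _i : σ, 1 := by
      simpa [Finsupp.sum_fintype] using (le_totalDegree hm).trans hdeg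
    have hge : ∀ i ∈ Finset.univ, 1 ≤ m i := fun i _ => one_le_of_mem_support hp hm i
    intro i
    exact ((Finset.sum_eq_sum_iff_of_le hge).1 (hle.antisymm' (Finset.sum_le_sum hge)) i
      (Finset.mem_univ i)).symm
  rw [eval_eq', eval_eq', Finset.sum_mul]
  refine Finset.sum_congr rfl fun m hm => ?_
  simp [hm_one m hm]

end CoordinateHyperplanes

/-! ### Reflections and the invariance of `P` -/

section Reflection

variable {R M : Type*} [CommRing R] [AddCommGroup M] [Module R M] (B : LinearMap.BilinForm R M)

/-- The map `x ↦ x + B(x, α) α`, which is the reflection in `α` when `B` is symmetric and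
`B(α, α) = -2`. -/
def formReflection (α : M) : Module.End R M := Module.preReflection α (-B.flip α)

variable {B} {α : M}

theorem formReflection_apply (x : M) : formReflection B α x = x + B x α • α := by
  simp [formReflection, Module.preReflection_apply]

theorem formReflection_of_apply_eq_zero {x : M} (hx : B x α = 0) :
    formReflection B α x = x := by
  simp [formReflection_apply, hx]

theorem involutive_formReflection (hα : B α α = -2) :
    Function.Involutive (formReflection B α) :=
  Module.involutive_preReflection (by simp [hα])

theorem apply_formReflection_left (hB : B.IsSymm) (x y : M) :
    B (formReflection B α x) y = B x (formReflection B α y) := by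
  simp [formReflection_apply, hB.eq α y, mul_comm]

theorem apply_formReflection_formReflection (hB : B.IsSymm) (hα : B α α = -2) (x y : M) :
    B (formReflection B α x) (formReflection B α y) = B x y := by
  rw [apply_formReflection_left hB, involutive_formReflection hα]

end Reflection

section LorentzForm

/-- The Lorentzian form `x₀y₀ - x₁y₁ - ⋯ - xₙyₙ` over an arbitrary ring, of which `dotZ` and `dotC`
are instances. -/
def lorentzForm (R : Type*) [CommRing R] (n : ℕ) : LinearMap.BilinForm R (Fin (n + 1) → R) :=
  LinearMap.mk₂ R (fun x y => x 0 * y 0 - ∑ i : Fin n, x i.succ * y i.succ)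
    (fun x x' y => by simp only [Pi.add_apply, add_mul, Finset.sum_add_distrib]; ring)
    (fun c x y => by simp only [Pi.smul_apply, smul_eq_mul, mul_assoc, ← Finset.mul_sum]; ring)
    (fun x y y' => by simp only [Pi.add_apply, mul_add, Finset.sum_add_distrib]; ring)
    (fun c x y => by
      simp only [Pi.smul_apply, smul_eq_mul, mul_left_comm _ c, ← Finset.mul_sum]; ring)

theorem isSymm_lorentzForm (R : Type*) [CommRing R] (n : ℕ) : (lorentzForm R n).IsSymm :=
  ⟨fun x y => by simp [lorentzForm, mul_comm]⟩

theorem dotZ_eq_lorentzForm (x y : Fin 7 → ℤ) : dotZ x y = lorentzForm ℤ 6 x y := rfl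

theorem dotC_eq_lorentzForm (x y : Fin 7 → ℂ) : dotC x y = lorentzForm ℂ 6 x y := rfl

end LorentzForm

/-- The inclusion of `Λ` into `Λ ⊗ ℂ`. -/
def toComplex (v : Fin 7 → ℤ) : Fin 7 → ℂ := fun i => (v i : ℂ)

/-- The reflection `s_α` acting on the lattice `Λ`. -/
abbrev reflZ (α : Fin 7 → ℤ) : Module.End ℤ (Fin 7 → ℤ) := formReflection (lorentzForm ℤ 6) α

theorem reflC_eq_formReflection (α : Fin 7 → ℤ) (x : Fin 7 → ℂ) :
    reflC α x = formReflection (lorentzForm ℂ 6) (toComplex α) x := by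
  rw [formReflection_apply, ← dotC_eq_lorentzForm]
  rfl

theorem dotC_toComplex (x y : Fin 7 → ℤ) : dotC (toComplex x) (toComplex y) = dotZ x y := by
  simp [dotC, dotZ, toComplex]

theorem toComplex_reflZ (α c : Fin 7 → ℤ) : toComplex (reflZ α c) = reflC α (toComplex c) := by
  funext i
  change _ = toComplex c i + dotC (toComplex c) (toComplex α) * toComplex α i
  rw [formReflection_apply, ← dotZ_eq_lorentzForm, dotC_toComplex]
  simp [toComplex]

theorem dotC_toComplex_reflC (α c : Fin 7 → ℤ) (x : Fin 7 → ℂ) :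
    dotC (toComplex c) (reflC α x) = dotC (toComplex (reflZ α c)) x := by
  rw [toComplex_reflZ, reflC_eq_formReflection, reflC_eq_formReflection, dotC_eq_lorentzForm,
    dotC_eq_lorentzForm, apply_formReflection_left (isSymm_lorentzForm ℂ 6)]

theorem K_zero : K 0 = -3 := rfl

theorem K_succ (i : Fin 6) : K i.succ = 1 := by
  revert i
  decide

theorem dotC_KC (x : Fin 7 → ℂ) : dotC x KC = -3 * x 0 - ∑ i : Fin 6, x i.succ := by
  simp [dotC, KC, K_zero, K_succ, mul_comm]

theorem dotC_weight {x : Fin 7 → ℂ} (hx : dotC x KC = 0) (c : Fin 7 → ℤ) :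
    dotC (weight c) x = dotC (toComplex c) x := by
  have hweight : weight c = toComplex c + (1 / 3 : ℂ) • KC := by
    funext i
    simp [weight, toComplex, div_eq_inv_mul]
  rw [dotC_eq_lorentzForm, (isSymm_lorentzForm ℂ 6).eq] at hx
  simp [hweight, dotC_eq_lorentzForm, hx]

namespace IsRoot

variable {α : Fin 7 → ℤ}

theorem isLine_reflZ (hα : IsRoot α) {c : Fin 7 → ℤ} (hc : IsLine c) : IsLine (reflZ α c) := by
  have hB := isSymm_lorentzForm ℤ 6
  have hK : reflZ α K = K := formReflection_of_apply_eq_zero ((hB.eq _ _).trans hα.2)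
  constructor
  · rw [dotZ_eq_lorentzForm, apply_formReflection_formReflection hB hα.1]
    exact hc.1
  · rw [dotZ_eq_lorentzForm, apply_formReflection_left hB, hK]
    exact hc.2

theorem dotC_reflC_KC (hα : IsRoot α) {x : Fin 7 → ℂ} (hx : dotC x KC = 0) :
    dotC (reflC α x) KC = 0 := by
  have hαK : dotC (toComplex α) KC = 0 := by
    change dotC (toComplex α) (toComplex K) = 0
    rw [dotC_toComplex, hα.2, Int.cast_zero]
  rw [dotC_eq_lorentzForm] at hx hαK
  simp [reflC_eq_formReflection, formReflection_apply, dotC_eq_lorentzForm, hx, hαK]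

end IsRoot

/-- Invariance under `W(E₆)` of a function on `K^⊥ ⊗ ℂ`, tested on the generating reflections. -/
def WeylInvariant (f : (Fin 7 → ℂ) → ℂ) : Prop :=
  ∀ α : Fin 7 → ℤ, IsRoot α → ∀ x : Fin 7 → ℂ, dotC x KC = 0 → f (reflC α x) = f x

theorem weylInvariant_P : WeylInvariant P := by
  intro α hα x hx
  have hinv := involutive_formReflection (B := lorentzForm ℤ 6) hα.1
  refine finsum_mem_eq_of_bijOn (reflZ α) ⟨fun c hc => hα.isLine_reflZ hc, hinv.injective.injOn,
    fun c hc => ⟨reflZ α c, hα.isLine_reflZ hc, hinv c⟩⟩ fun c _ => ?_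
  rw [dotC_weight (hα.dotC_reflC_KC hx), dotC_weight hx, dotC_toComplex_reflC]

/-! ### The 27 lines and a value of `P` -/

theorem mem_Icc_of_sum_sq_eq_sum {ι : Type*} {s : Finset ι} {b : ι → ℤ}
    (h : ∑ j ∈ s, b j ^ 2 = ∑ j ∈ s, b j) {i : ι} (hi : i ∈ s) : b i ∈ Finset.Icc 0 1 := by
  have hbi : b i = b i ^ 2 :=
    (Finset.sum_eq_sum_iff_of_le fun j _ => Int.le_self_sq (b j)).1 h.symm i hi
  rw [Finset.mem_Icc]
  constructor <;> nlinarith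

namespace IsLine

variable {e : Fin 7 → ℤ}

theorem sum_sq (he : IsLine e) : ∑ i : Fin 6, e i.succ ^ 2 = e 0 ^ 2 + 1 := by
  have hself := he.1
  simp only [dotZ, ← sq] at hself
  linarith

theorem sum_eq (he : IsLine e) : ∑ i : Fin 6, e i.succ = 1 - 3 * e 0 := by
  have hK := he.2
  simp only [dotZ, K_zero, K_succ, mul_one] at hK
  linarith

theorem zero_mem_Icc (he : IsLine e) : e 0 ∈ Finset.Icc 0 2 := by
  have hcauchy := sq_sum_le_card_mul_sum_sq (s := Finset.univ) (f := fun i : Fin 6 => e i.succ)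
  rw [he.sum_sq, he.sum_eq, Finset.card_univ, Fintype.card_fin] at hcauchy
  push_cast at hcauchy
  rw [Finset.mem_Icc]
  constructor <;> nlinarith

theorem succ_mem_Icc (he : IsLine e) (i : Fin 6) : e i.succ ∈ Finset.Icc (-1) 1 := by
  obtain hzero | hroot : e 0 = 0 ∨ e 0 ^ 2 - 3 * e 0 + 2 = 0 := by
    have ha := he.zero_mem_Icc
    generalize e 0 = a at ha ⊢
    revert a
    decide
  -- The squares of the `eⱼ` add up to `∑ eⱼ` if `e₀ = 0`, and to `-∑ eⱼ` if `e₀ = 1` or `e₀ = 2`.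
  · have hmem := mem_Icc_of_sum_sq_eq_sum (s := Finset.univ) (b := fun j : Fin 6 => e j.succ)
      (by rw [he.sum_sq, he.sum_eq, hzero]; norm_num) (Finset.mem_univ i)
    exact Finset.Icc_subset_Icc_left (by norm_num) hmem
  · have hmem := mem_Icc_of_sum_sq_eq_sum (s := Finset.univ) (b := fun j : Fin 6 => -e j.succ)
      (by simp only [neg_sq, Finset.sum_neg_distrib, he.sum_sq, he.sum_eq]; linarith)
      (Finset.mem_univ i)
    rw [Finset.mem_Icc] at hmem ⊢
    constructor <;> linarith

end IsLine

instance : DecidablePred IsLine := fun _ => instDecidableAnd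

instance : DecidablePred IsRoot := fun _ => instDecidableAnd

/-- The 27 line classes, cut out of a box that contains them all. -/
def lines : Finset (Fin 7 → ℤ) :=
  {e ∈ Fintype.piFinset (Fin.cons (Finset.Icc 0 2) fun _ : Fin 6 => Finset.Icc (-1) 1) | IsLine e}

theorem mem_lines {e : Fin 7 → ℤ} : e ∈ lines ↔ IsLine e := by
  simp only [lines, Finset.mem_filter, Fintype.mem_piFinset, and_iff_right_iff_imp]
  exact fun he => Fin.cases he.zero_mem_Icc he.succ_mem_Icc

theorem P_eq_sum_lines (x : Fin 7 → ℂ) : P x = ∑ c ∈ lines, dotC (weight c) x ^ 5 := by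
  rw [P, ← finsum_mem_coe_finset]
  simp only [Finset.mem_coe, mem_lines, Set.mem_ofPred_eq]

/-- A point of `K^⊥` on the wall `x₆ = 0` at which `P` does not vanish. -/
def basePoint : Fin 7 → ℤ := ![5, -3, -3, -3, -3, -3, 0]

theorem dotC_basePoint_KC : dotC (toComplex basePoint) KC = 0 :=
  (dotC_toComplex basePoint K).trans (by simp [show dotZ basePoint K = 0 by decide])

theorem sum_lines_dotZ_basePoint : ∑ c ∈ lines, dotZ c basePoint ^ 5 = -1920 := by
  decide +kernel

theorem P_basePoint : P (toComplex basePoint) = -1920 := by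
  simp only [P_eq_sum_lines, dotC_weight dotC_basePoint_KC, dotC_toComplex]
  exact_mod_cast sum_lines_dotZ_basePoint

theorem P_basePoint_ne_zero : P (toComplex basePoint) ≠ 0 := by
  norm_num [P_basePoint]

/-- The linear form `x ↦ w · x` as a polynomial. -/
def linearForm (w : Fin 7 → ℂ) : MvPolynomial (Fin 7) ℂ :=
  C (w 0) * X 0 - ∑ i : Fin 6, C (w i.succ) * X i.succ

/-- Hunt's quintic `P` as a polynomial in the coordinates of `ℂ⁷`. -/
def huntQuintic : MvPolynomial (Fin 7) ℂ := ∑ c ∈ lines, linearForm (weight c) ^ 5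

theorem eval_huntQuintic (x : Fin 7 → ℂ) : eval x huntQuintic = P x := by
  simp [huntQuintic, linearForm, P_eq_sum_lines, dotC]

theorem isHomogeneous_linearForm (w : Fin 7 → ℂ) : (linearForm w).IsHomogeneous 1 :=
  (isHomogeneous_C_mul_X _ _).sub (.sum _ _ _ fun _ _ => isHomogeneous_C_mul_X _ _)

theorem isHomogeneous_huntQuintic : huntQuintic.IsHomogeneous 5 :=
  .sum _ _ _ fun c _ => by simpa using (isHomogeneous_linearForm (weight c)).pow 5

/-! ### Vanishing of odd invariants on `D₄`-subspaces -/

theorem isRoot_single_sub_single {i j : Fin 6} (hij : i ≠ j) :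
    IsRoot (Pi.single i.succ 1 - Pi.single j.succ 1) := by
  revert i j
  decide +kernel

theorem reflC_single_sub_single (i j : Fin 6) (x : Fin 7 → ℂ) :
    reflC (Pi.single i.succ 1 - Pi.single j.succ 1) x = x ∘ Equiv.swap i.succ j.succ := by
  have hdot : dotC x (toComplex (Pi.single i.succ 1 - Pi.single j.succ 1)) =
      x j.succ - x i.succ := by
    simp [dotC, toComplex, Pi.single_apply, mul_sub, Finset.sum_sub_distrib]
  funext k
  change x k + dotC x (toComplex _) * toComplex _ k = _
  rw [hdot]
  rcases eq_or_ne i j with rfl | hij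
  · simp
  rcases eq_or_ne k i.succ with rfl | hki
  · simp [toComplex, hij]
  rcases eq_or_ne k j.succ with rfl | hkj
  · simp [toComplex, hij.symm]
  · simp [toComplex, hki, hkj, Equiv.swap_apply_of_ne_of_ne]

theorem dotC_comp_swap_KC {x : Fin 7 → ℂ} (hx : dotC x KC = 0) (i j : Fin 6) :
    dotC (x ∘ Equiv.swap i.succ j.succ) KC = 0 := by
  rcases eq_or_ne i j with rfl | hij
  · simpa using hx
  · rw [← reflC_single_sub_single]
    exact (isRoot_single_sub_single hij).dotC_reflC_KC hx

theorem dotC_foldr_reflC_KC {x : Fin 7 → ℂ} (hx : dotC x KC = 0) {l : List (Fin 7 → ℤ)}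
    (hl : ∀ α ∈ l, IsRoot α) : dotC (l.foldr reflC x) KC = 0 := by
  induction l with
  | nil => exact hx
  | cons α l ih =>
    obtain ⟨hα, hl⟩ := List.forall_mem_cons.1 hl
    exact hα.dotC_reflC_KC (ih hl)

/-- Four mutually orthogonal roots; they span the `D₄`-subspace of `K^⊥` orthogonal to the
incident lines `e₆` and `l - e₅ - e₆`. -/
def orthogonalRoots : List (Fin 7 → ℤ) :=
  [![0, 1, -1, 0, 0, 0, 0], ![0, 0, 0, 1, -1, 0, 0],
    ![1, -1, -1, 0, 0, -1, 0], ![1, 0, 0, -1, -1, -1, 0]]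

theorem foldr_reflC_orthogonalRoots {x : Fin 7 → ℂ} (hx : dotC x KC = 0) (hx₅ : x 0 + x 5 = 0)
    (hx₆ : x 6 = 0) : orthogonalRoots.foldr reflC x = -x := by
  have hx₄ : x 4 = -2 * x 0 - x 1 - x 2 - x 3 := by
    rw [dotC_KC, Fin.sum_univ_six] at hx
    change -3 * x 0 - (x 1 + x 2 + x 3 + x 4 + x 5 + x 6) = 0 at hx
    linear_combination -hx - hx₅ - hx₆
  replace hx₅ : x 5 = -x 0 := by linear_combination hx₅
  funext k
  fin_cases k <;>
    simp [orthogonalRoots, reflC, dotC, Fin.sum_univ_succ, hx₄, hx₅, hx₆] <;> ring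

namespace WeylInvariant

variable {f : (Fin 7 → ℂ) → ℂ} {x : Fin 7 → ℂ}

theorem map_comp_swap (hf : WeylInvariant f) (hx : dotC x KC = 0) (i j : Fin 6) :
    f (x ∘ Equiv.swap i.succ j.succ) = f x := by
  rcases eq_or_ne i j with rfl | hij
  · simp
  · rw [← reflC_single_sub_single]
    exact hf _ (isRoot_single_sub_single hij) x hx

theorem map_foldr_reflC (hf : WeylInvariant f) (hx : dotC x KC = 0) {l : List (Fin 7 → ℤ)}
    (hl : ∀ α ∈ l, IsRoot α) : f (l.foldr reflC x) = f x := by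
  induction l with
  | nil => rfl
  | cons α l ih =>
    obtain ⟨hα, hl⟩ := List.forall_mem_cons.1 hl
    exact (hf α hα _ (dotC_foldr_reflC_KC hx hl)).trans (ih hl)

theorem eq_zero_of_orthogonal_incident_lines (hf : WeylInvariant f)
    (hodd : ∀ x, f (-x) = -f x) (hx : dotC x KC = 0) (hx₆ : x 6 = 0) {i : Fin 5}
    (hxi : x 0 + x i.castSucc.succ = 0) : f x = 0 := by
  set y := x ∘ Equiv.swap i.castSucc.succ (Fin.succ 4)
  have hy : dotC y KC = 0 := dotC_comp_swap_KC hx _ _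
  have hy₅ : y 0 + y 5 = 0 := by
    simpa [y, Equiv.swap_apply_of_ne_of_ne, (Fin.succ_ne_zero _).symm] using hxi
  have hy₆ : y 6 = 0 := by
    have hi : (6 : Fin 7) ≠ i.castSucc.succ := by clear * -; revert i; decide
    simpa [y, Equiv.swap_apply_of_ne_of_ne hi (by decide : (6 : Fin 7) ≠ 5)] using hx₆
  have hfy : f (-y) = f y := by
    rw [← foldr_reflC_orthogonalRoots hy hy₅ hy₆]
    exact hf.map_foldr_reflC hy (by decide)
  rw [← hf.map_comp_swap hx i.castSucc 4]
  exact self_eq_neg.1 (hfy.symm.trans (hodd y))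

end WeylInvariant

/-! ### Uniqueness of the invariant quintic -/

/-- The parametrization of the `D₅`-subspace `x₆ = 0` of `K^⊥` by the coordinates
`yᵢ = (x₀ + xᵢ) / 2`, `1 ≤ i ≤ 5`. -/
def wallParam : Matrix (Fin 7) (Fin 5) ℂ :=
  !![1, 1, 1, 1, 1; 1, -1, -1, -1, -1; -1, 1, -1, -1, -1; -1, -1, 1, -1, -1; -1, -1, -1, 1, -1;
    -1, -1, -1, -1, 1; 0, 0, 0, 0, 0]

/-- The parametrization of `K^⊥` by the coordinates `x₁, …, x₆`. -/
def perpParam : Matrix (Fin 7) (Fin 6) ℂ :=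
  Matrix.of (Matrix.vecCons (fun _ => -1 / 3) fun i => Pi.single i 1)

theorem wallParam_mulVec_zero (y : Fin 5 → ℂ) : wallParam.mulVec y 0 = ∑ i, y i := by
  simp [wallParam, Matrix.mulVec, dotProduct, Fin.sum_univ_succ]

theorem wallParam_mulVec_succ (y : Fin 5 → ℂ) (i : Fin 5) :
    wallParam.mulVec y i.castSucc.succ = 2 * y i - ∑ j, y j := by
  fin_cases i <;> simp [wallParam, Matrix.mulVec, dotProduct, Fin.sum_univ_succ] <;> ring

theorem wallParam_mulVec_six (y : Fin 5 → ℂ) : wallParam.mulVec y 6 = 0 := by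
  simp [wallParam, Matrix.mulVec, dotProduct, Fin.sum_univ_succ]

theorem dotC_wallParam_mulVec_KC (y : Fin 5 → ℂ) : dotC (wallParam.mulVec y) KC = 0 := by
  rw [dotC_KC, Fin.sum_univ_castSucc]
  simp only [wallParam_mulVec_zero, wallParam_mulVec_succ, Fin.succ_last]
  rw [show Fin.last (5 + 1) = 6 from rfl, wallParam_mulVec_six, Finset.sum_sub_distrib,
    ← Finset.mul_sum, Fin.sum_const, nsmul_eq_mul]
  push_cast
  ring

theorem wallParam_mulVec_one : wallParam.mulVec 1 = toComplex basePoint := by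
  funext k
  fin_cases k <;>
    norm_num [wallParam, Matrix.mulVec, dotProduct, Fin.sum_univ_succ, toComplex, basePoint]

theorem wallParam_mulVec_half {x : Fin 7 → ℂ} (hx : dotC x KC = 0) (hx₆ : x 6 = 0) :
    wallParam.mulVec (fun i => (x 0 + x i.castSucc.succ) / 2) = x := by
  have hsum : ∑ i : Fin 5, (x 0 + x i.castSucc.succ) / 2 = x 0 := by
    rw [dotC_KC, Fin.sum_univ_castSucc, show (Fin.last 5).succ = 6 from rfl, hx₆] at hx
    rw [← Finset.sum_div, Finset.sum_add_distrib, Fin.sum_const, nsmul_eq_mul]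
    linear_combination -hx / 2
  funext k
  refine Fin.cases ?_ (Fin.lastCases ?_ fun i => ?_) k
  · rw [wallParam_mulVec_zero, hsum]
  · exact (wallParam_mulVec_six _).trans hx₆.symm
  · rw [wallParam_mulVec_succ, hsum]
    ring

theorem perpParam_mulVec (y : Fin 6 → ℂ) :
    perpParam.mulVec y = Matrix.vecCons (-(∑ i, y i) / 3) y := by
  rw [perpParam, Matrix.cons_mulVec]
  congr 1
  · rw [dotProduct, ← Finset.mul_sum]
    ring
  · funext i
    exact single_one_dotProduct i y

theorem dotC_perpParam_mulVec_KC (y : Fin 6 → ℂ) : dotC (perpParam.mulVec y) KC = 0 := by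
  simp only [dotC_KC, perpParam_mulVec, Matrix.cons_val_zero, Matrix.cons_val_succ]
  ring

theorem perpParam_mulVec_vecTail {x : Fin 7 → ℂ} (hx : dotC x KC = 0) :
    perpParam.mulVec (Matrix.vecTail x) = x := by
  have hhead : -(∑ i, Matrix.vecTail x i) / 3 = Matrix.vecHead x := by
    rw [dotC_KC] at hx
    simp only [Matrix.vecTail, Matrix.vecHead, Function.comp_apply]
    linear_combination hx / 3
  rw [perpParam_mulVec, hhead, Matrix.cons_head_tail]

section Uniqueness

variable {q : MvPolynomial (Fin 7) ℂ}

theorem eval_eq_zero_of_six_eq_zero (hq : q.IsHomogeneous 5) (hinv : WeylInvariant (eval · q))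
    (hbase : eval (toComplex basePoint) q = 0) {x : Fin 7 → ℂ} (hx : dotC x KC = 0)
    (hx₆ : x 6 = 0) : eval x q = 0 := by
  obtain ⟨r, hr, heval⟩ := exists_isHomogeneous_eval_eq_eval_mulVec hq wallParam
  have hodd (z : Fin 7 → ℂ) : eval (-z) q = -eval z q := by
    simpa [Odd.neg_one_pow (by decide : Odd 5)] using eval_smul_of_isHomogeneous hq (-1) z
  have hvanish : ∀ i y, y i = 0 → eval y r = 0 := by
    intro i y hyi
    rw [heval]
    refine hinv.eq_zero_of_orthogonal_incident_lines hodd (dotC_wallParam_mulVec_KC y)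
      (wallParam_mulVec_six y) (i := i) ?_
    rw [wallParam_mulVec_zero, wallParam_mulVec_succ, hyi]
    ring
  have hdeg : r.totalDegree ≤ Fintype.card (Fin 5) := by simpa using hr.totalDegree_le
  rw [← wallParam_mulVec_half hx hx₆, ← heval, eval_eq_eval_one_mul_prod hdeg hvanish, heval 1,
    wallParam_mulVec_one, hbase, zero_mul]

theorem eval_eq_zero_of_weylInvariant (hq : q.IsHomogeneous 5) (hinv : WeylInvariant (eval · q))
    (hbase : eval (toComplex basePoint) q = 0) {x : Fin 7 → ℂ} (hx : dotC x KC = 0) :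
    eval x q = 0 := by
  obtain ⟨r, hr, heval⟩ := exists_isHomogeneous_eval_eq_eval_mulVec hq perpParam
  have hvanish : ∀ i y, y i = 0 → eval y r = 0 := by
    intro i y hyi
    have hy := dotC_perpParam_mulVec_KC y
    rw [heval, ← hinv.map_comp_swap hy i 5]
    refine eval_eq_zero_of_six_eq_zero hq hinv hbase (dotC_comp_swap_KC hy i 5) ?_
    change perpParam.mulVec y (Equiv.swap i.succ 6 6) = 0
    rw [Equiv.swap_apply_right, perpParam_mulVec, Matrix.cons_val_succ, hyi]
  have hr₀ : r = 0 := eq_zero_of_totalDegree_lt_card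
    (hr.totalDegree_le.trans_lt (by simp)) hvanish
  rw [← perpParam_mulVec_vecTail hx, ← heval, hr₀, map_zero]

end Uniqueness

theorem statement8 :
    (∃ x : Fin 7 → ℂ, dotC x KC = 0 ∧ P x ≠ 0) ∧
    (∀ α : Fin 7 → ℤ, IsRoot α → ∀ x : Fin 7 → ℂ, dotC x KC = 0 → P (reflC α x) = P x) ∧
    (∀ q : MvPolynomial (Fin 7) ℂ, q.IsHomogeneous 5 →
      (∀ α : Fin 7 → ℤ, IsRoot α → ∀ x : Fin 7 → ℂ, dotC x KC = 0 →
        eval (reflC α x) q = eval x q) →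
      ∃ t : ℂ, ∀ x : Fin 7 → ℂ, dotC x KC = 0 → eval x q = t * P x) := by
  refine ⟨⟨_, dotC_basePoint_KC, P_basePoint_ne_zero⟩, weylInvariant_P, fun q hq hinv => ?_⟩
  set t := eval (toComplex basePoint) q / P (toComplex basePoint)
  refine ⟨t, fun x hx => ?_⟩
  have heval (y : Fin 7 → ℂ) : eval y (q - C t * huntQuintic) = eval y q - t * P y := by
    simp [eval_huntQuintic]
  rw [← sub_eq_zero, ← heval]
  refine eval_eq_zero_of_weylInvariant (hq.sub (isHomogeneous_huntQuintic.C_mul t)) ?_ ?_ hx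
  · intro α hα y hy
    simp only [heval, hinv α hα y hy, weylInvariant_P α hα y hy]
  · rw [heval, div_mul_cancel₀ _ P_basePoint_ne_zero, sub_self]

end Stmt8
end
end

section
/- Let t₁ and t₂ be disjoint tritangent sets (no line class in common). Then: (i) for every l ∈ t₁ there is exactly one m ∈ t₂ with l·m = 1 (and l·m = 0 for the other two elements of t₂), which defines a bijection φ : t₁ → t₂; (ii) for every l ∈ t₁ the element −K − l − φ(l) is a line class; and (iii) the set t₃ = {−K − l − φ(l) : l ∈ t₁} is a tritangent set disjoint from both t₁ and t₂. (Thus the 32 tritangents having no line in common with a given tritangent come in pairs, and if the lines of t₁ and of t₂ each pass through an Eckart point, so do the lines of t₃.) -/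
/-!
Statement 13: for disjoint tritangent sets t₁, t₂ there is a bijection
φ : t₁ → t₂ with l·φ(l) = 1 and l·m = 0 for the other two m ∈ t₂; each
−K − l − φ(l) is a line class; and t₃ = {−K − l − φ(l)} is a tritangent set
disjoint from t₁ and t₂.
-/

noncomputable section

namespace Stmt13

/-- The bilinear form `x·y = x₀y₀ − x₁y₁ − ⋯ − x₆y₆` on `Λ = ℤ⁷`. -/
def dot (x y : Fin 7 → ℤ) : ℤ := x 0 * y 0 - ∑ i : Fin 6, x i.succ * y i.succ

/-- The canonical class `K = (−3,1,1,1,1,1,1)`. -/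
def K : Fin 7 → ℤ := ![-3, 1, 1, 1, 1, 1, 1]

/-- A line class: `e·e = −1` and `e·K = −1`. -/
def IsLine (e : Fin 7 → ℤ) : Prop := dot e e = -1 ∧ dot e K = -1

/-- A tritangent set: three line classes summing to `−K`. -/
def IsTritangent (t : Finset (Fin 7 → ℤ)) : Prop :=
  t.card = 3 ∧ (∀ e ∈ t, IsLine e) ∧ ∑ e ∈ t, e = -K

/-!
By Cauchy–Schwarz the form is negative definite on `K^⊥`, so two distinct line classes
have nonnegative product. A line class outside a tritangent set has products with its three elements
summing to `1`, hence meets exactly one of them; applying this to `t₁` and `t₂` in both directions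
gives mutually inverse maps. For line classes `l`, `m` the residual class `-K - l - m` is a line
class exactly when `l · m = 1`, and it is the third element of any tritangent set containing
both; so were `-K - l - φ l` in `t₁`, then `φ l` would be as well.
-/

section FinsetSums

variable {ι M : Type*}

theorem exists_eq_one_of_sum_eq_one {s : Finset ι} {f : ι → ℤ} (hf : ∀ i ∈ s, 0 ≤ f i)
    (hsum : ∑ i ∈ s, f i = 1) : ∃ i ∈ s, f i = 1 ∧ ∀ j ∈ s, j ≠ i → f j = 0 := by
  classical
  obtain ⟨i, hi, hfi⟩ : ∃ i ∈ s, f i ≠ 0 :=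
    Finset.exists_ne_zero_of_sum_ne_zero (hsum.trans_ne one_ne_zero)
  have herase : ∀ j ∈ s.erase i, 0 ≤ f j := fun j hj => hf j (Finset.mem_of_mem_erase hj)
  have hadd := Finset.add_sum_erase s f hi
  have hpos : 0 < f i := (hf i hi).lt_of_ne' hfi
  have hrest : 0 ≤ ∑ j ∈ s.erase i, f j := Finset.sum_nonneg herase
  refine ⟨i, hi, by lia, fun j hj hji => ?_⟩
  exact (Finset.sum_eq_zero_iff_of_nonneg herase).1 (by lia) j (Finset.mem_erase.2 ⟨hji, hj⟩)

theorem sum_sub_sub_mem_of_card_eq_three [AddCommGroup M] {t : Finset M} (ht : t.card = 3)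
    {x y : M} (hx : x ∈ t) (hy : y ∈ t) (hxy : x ≠ y) : ∑ e ∈ t, e - x - y ∈ t := by
  classical
  have hsub : {x, y} ⊆ t := Finset.insert_subset hx (Finset.singleton_subset_iff.2 hy)
  obtain ⟨z, hz⟩ : ∃ z, t \ {x, y} = {z} := by
    rw [← Finset.card_eq_one, Finset.card_sdiff_of_subset hsub, Finset.card_pair hxy, ht]
  have hsum : z + (x + y) = ∑ e ∈ t, e := by
    rw [← Finset.sum_sdiff hsub, hz, Finset.sum_singleton, Finset.sum_pair hxy]
  rw [← hsum, sub_sub, add_sub_cancel_right]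
  exact Finset.sdiff_subset (hz ▸ Finset.mem_singleton_self z)

end FinsetSums

section Form

variable (x y z : Fin 7 → ℤ)

theorem dot_comm : dot x y = dot y x := by
  simp only [dot, mul_comm]

theorem dot_add_right : dot x (y + z) = dot x y + dot x z := by
  simp only [dot, Pi.add_apply, mul_add, Finset.sum_add_distrib]
  ring

theorem dot_smul_right (c : ℤ) : dot x (c • y) = c • dot x y := by
  simp only [dot, Pi.smul_apply, smul_eq_mul, mul_left_comm _ c, mul_sub, Finset.mul_sum]

/-- The intersection form `dot` as a bundled bilinear form, through which it inherits the library's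
lemmas on linear maps. -/
def dotForm : LinearMap.BilinForm ℤ (Fin 7 → ℤ) :=
  LinearMap.mk₂ ℤ dot
    (fun x y z => by simp only [dot_comm _ z, dot_add_right])
    (fun c x y => by simp only [dot_comm _ y, dot_smul_right])
    dot_add_right
    (fun c x y => dot_smul_right x y c)

theorem dot_neg_right : dot x (-y) = -dot x y :=
  map_neg (dotForm x) y

theorem dot_sub_right : dot x (y - z) = dot x y - dot x z :=
  map_sub (dotForm x) y z

theorem dot_sub_left : dot (x - y) z = dot x z - dot y z :=
  dotForm.map_sub₂ x y z

theorem dot_neg_left : dot (-x) y = -dot x y :=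
  dotForm.map_neg₂ x y

theorem dot_sum_right (t : Finset (Fin 7 → ℤ)) : dot x (∑ e ∈ t, e) = ∑ e ∈ t, dot x e :=
  map_sum (dotForm x) _ t

theorem dot_K_right : dot x K = -(3 * x 0 + ∑ i : Fin 6, x i.succ) := by
  have hK₀ : K 0 = -3 := rfl
  have hKsucc : ∀ i : Fin 6, K i.succ = 1 := by decide
  simp only [dot, hK₀, hKsucc, mul_one]
  ring

theorem dot_K_K : dot K K = 3 := by
  rw [dot_K_right]
  decide

end Form

theorem dot_self_neg_of_dot_K_eq_zero {v : Fin 7 → ℤ} (hvK : dot v K = 0) (hv : v ≠ 0) :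
    dot v v < 0 := by
  by_contra! hnonneg
  apply hv
  set S := ∑ i : Fin 6, v i.succ ^ 2
  have hself : dot v v = v 0 ^ 2 - S := by
    simp only [dot, S, sq]
  have htrace : ∑ i : Fin 6, v i.succ = -(3 * v 0) := by
    linarith [dot_K_right v]
  have hcauchy : (3 * v 0) ^ 2 ≤ 6 * S := by
    simpa [htrace] using
      sq_sum_le_card_mul_sum_sq (s := Finset.univ) (f := fun i : Fin 6 => v i.succ)
  have hv₀ : v 0 = 0 := by
    nlinarith [sq_nonneg (v 0)]
  have hS : S = 0 := by
    rw [hself, hv₀] at hnonneg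
    exact le_antisymm (by linarith) (Finset.sum_nonneg fun _ _ => sq_nonneg _)
  have hvsucc : ∀ i : Fin 6, v i.succ = 0 := by
    simpa [S, Finset.sum_eq_zero_iff_of_nonneg, sq_nonneg] using hS
  exact funext (Fin.cases hv₀ hvsucc)

section Lines

variable {l m : Fin 7 → ℤ}

theorem IsLine.dot_nonneg (hl : IsLine l) (hm : IsLine m) (hne : l ≠ m) : 0 ≤ dot l m := by
  have hK : dot (l - m) K = 0 := by
    rw [dot_sub_left, hl.2, hm.2, sub_self]
  have hself : dot (l - m) (l - m) = -2 - 2 * dot l m := by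
    simp only [dot_sub_left, dot_sub_right, dot_comm m l, hl.1, hm.1]
    ring
  have hneg := dot_self_neg_of_dot_K_eq_zero hK (sub_ne_zero.2 hne)
  lia

theorem isLine_neg_K_sub_sub_iff (hl : IsLine l) (hm : IsLine m) :
    IsLine (-K - l - m) ↔ dot l m = 1 := by
  have hK : dot (-K - l - m) K = -1 := by
    simp only [dot_sub_left, dot_neg_left, dot_K_K, hl.2, hm.2]
    norm_num
  have hself : dot (-K - l - m) (-K - l - m) = 2 * dot l m - 3 := by
    simp only [dot_sub_left, dot_sub_right, dot_neg_left, dot_neg_right, dot_K_K,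
      dot_comm K l, dot_comm K m, dot_comm m l, hl.1, hl.2, hm.1, hm.2]
    ring
  rw [IsLine, hK, hself]
  lia

theorem IsLine.dot_neg_K_sub_sub_left (hl : IsLine l) (hlm : dot l m = 1) :
    dot l (-K - l - m) = 1 := by
  rw [dot_sub_right, dot_sub_right, dot_neg_right, hl.1, hl.2, hlm]
  norm_num

end Lines

section Tritangents

variable {t : Finset (Fin 7 → ℤ)} {l m : Fin 7 → ℤ}

theorem IsTritangent.sum_dot_eq_one (ht : IsTritangent t) (hl : IsLine l) :
    ∑ m ∈ t, dot l m = 1 := by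
  rw [← dot_sum_right, ht.2.2, dot_neg_right, hl.2, neg_neg]

theorem IsTritangent.exists_dot_eq_one (ht : IsTritangent t) (hl : IsLine l) (hlt : l ∉ t) :
    ∃ m ∈ t, dot l m = 1 ∧ ∀ m' ∈ t, m' ≠ m → dot l m' = 0 :=
  exists_eq_one_of_sum_eq_one
    (fun m hm => hl.dot_nonneg (ht.2.1 m hm) (ne_of_mem_of_not_mem hm hlt).symm)
    (ht.sum_dot_eq_one hl)

theorem IsTritangent.neg_K_sub_sub_mem (ht : IsTritangent t) (hl : l ∈ t) (hm : m ∈ t)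
    (hne : l ≠ m) : -K - l - m ∈ t :=
  ht.2.2 ▸ sum_sub_sub_mem_of_card_eq_three ht.1 hl hm hne

theorem IsTritangent.dot_eq_one (ht : IsTritangent t) (hl : l ∈ t) (hm : m ∈ t)
    (hne : l ≠ m) : dot l m = 1 :=
  (isLine_neg_K_sub_sub_iff (ht.2.1 l hl) (ht.2.1 m hm)).1
    (ht.2.1 _ (ht.neg_K_sub_sub_mem hl hm hne))

theorem IsTritangent.neg_K_sub_sub_notMem (ht : IsTritangent t) (hl : l ∈ t) (hm : m ∉ t)
    (hlm : dot l m = 1) : -K - l - m ∉ t := by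
  intro hmem
  have hline := ht.2.1 l hl
  have hne : l ≠ -K - l - m := by
    intro heq
    have hself := hline.dot_neg_K_sub_sub_left hlm
    rw [← heq, hline.1] at hself
    norm_num at hself
  have hthird := ht.neg_K_sub_sub_mem hl hmem hne
  rw [sub_sub_cancel] at hthird
  exact hm hthird

end Tritangents

/-- `φ` assigns to each `l ∈ t₁` the only element of `t₂` that meets it, the other elements of `t₂`
having product `0` with `l`. Its values outside `t₁` are unconstrained. -/
def IsIncidenceMap (t₁ t₂ : Finset (Fin 7 → ℤ)) (φ : (Fin 7 → ℤ) → (Fin 7 → ℤ)) : Prop :=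
  ∀ l ∈ t₁, φ l ∈ t₂ ∧ dot l (φ l) = 1 ∧ ∀ m ∈ t₂, m ≠ φ l → dot l m = 0

section IncidenceMaps

variable {t₁ t₂ : Finset (Fin 7 → ℤ)} {φ ψ : (Fin 7 → ℤ) → (Fin 7 → ℤ)} {l m : Fin 7 → ℤ}

theorem exists_isIncidenceMap (ht₁ : ∀ l ∈ t₁, IsLine l) (ht₂ : IsTritangent t₂)
    (hdisj : Disjoint t₁ t₂) : ∃ φ, IsIncidenceMap t₁ t₂ φ := by
  have hmeet : ∀ l ∈ t₁, ∃ m ∈ t₂, dot l m = 1 ∧ ∀ m' ∈ t₂, m' ≠ m → dot l m' = 0 :=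
    fun l hl => ht₂.exists_dot_eq_one (ht₁ l hl) (Finset.disjoint_left.1 hdisj hl)
  choose! φ hφ using hmeet
  exact ⟨φ, hφ⟩

namespace IsIncidenceMap

theorem eq_of_dot_eq_one (hφ : IsIncidenceMap t₁ t₂ φ) (hl : l ∈ t₁) (hm : m ∈ t₂)
    (hlm : dot l m = 1) : φ l = m := by
  by_contra hne
  have hzero := (hφ l hl).2.2 m hm (Ne.symm hne)
  lia

theorem leftInvOn (hφ : IsIncidenceMap t₁ t₂ φ) (hψ : IsIncidenceMap t₂ t₁ ψ) :
    Set.LeftInvOn ψ φ t₁ := fun l hl =>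
  hψ.eq_of_dot_eq_one (hφ l hl).1 hl ((dot_comm _ _).trans (hφ l hl).2.1)

theorem bijOn (hφ : IsIncidenceMap t₁ t₂ φ) (hψ : IsIncidenceMap t₂ t₁ ψ) :
    Set.BijOn φ t₁ t₂ :=
  Set.InvOn.bijOn ⟨hφ.leftInvOn hψ, hψ.leftInvOn hφ⟩ (fun l hl => (hφ l hl).1)
    fun m hm => (hψ m hm).1

theorem isLine_neg_K_sub_sub (hφ : IsIncidenceMap t₁ t₂ φ) (ht₁ : ∀ l ∈ t₁, IsLine l)
    (ht₂ : ∀ m ∈ t₂, IsLine m) (hl : l ∈ t₁) : IsLine (-K - l - φ l) :=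
  (isLine_neg_K_sub_sub_iff (ht₁ l hl) (ht₂ _ (hφ l hl).1)).2 (hφ l hl).2.1

theorem injOn_neg_K_sub_sub (hφ : IsIncidenceMap t₁ t₂ φ) (ht₁ : IsTritangent t₁)
    (hinj : Set.InjOn φ t₁) : Set.InjOn (fun l => -K - l - φ l) t₁ := by
  intro l hl l' hl' heq
  by_contra hne
  have hself : dot l (-K - l - φ l) = 1 :=
    (ht₁.2.1 l hl).dot_neg_K_sub_sub_left (hφ l hl).2.1
  have hφl' : dot l (φ l') = 0 :=
    (hφ l hl).2.2 _ (hφ l' hl').1 (hinj.ne hl' hl (Ne.symm hne))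
  have hother : dot l (-K - l' - φ l') = 0 := by
    rw [dot_sub_right, dot_sub_right, dot_neg_right, (ht₁.2.1 l hl).2,
      ht₁.dot_eq_one hl hl' hne, hφl']
    norm_num
  have hmixed : dot l (-K - l - φ l) = dot l (-K - l' - φ l') := congrArg (dot l) heq
  rw [hself, hother] at hmixed
  exact one_ne_zero hmixed

theorem isTritangent_image (hφ : IsIncidenceMap t₁ t₂ φ) (ht₁ : IsTritangent t₁)
    (ht₂ : IsTritangent t₂) (hbij : Set.BijOn φ t₁ t₂) :
    IsTritangent (t₁.image fun l => -K - l - φ l) := by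
  have hinj := hφ.injOn_neg_K_sub_sub ht₁ hbij.injOn
  have hsumφ : ∑ l ∈ t₁, φ l = -K :=
    (Finset.sum_nbij φ hbij.mapsTo hbij.injOn hbij.surjOn fun _ _ => rfl).trans ht₂.2.2
  refine ⟨(Finset.card_image_of_injOn hinj).trans ht₁.1, Finset.forall_mem_image.2 fun l hl =>
    hφ.isLine_neg_K_sub_sub ht₁.2.1 ht₂.2.1 hl, ?_⟩
  rw [Finset.sum_image hinj, Finset.sum_sub_distrib, Finset.sum_sub_distrib, Finset.sum_const,
    ht₁.1, ht₁.2.2, hsumφ]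
  module

theorem disjoint_image_left (hφ : IsIncidenceMap t₁ t₂ φ) (ht₁ : IsTritangent t₁)
    (hdisj : Disjoint t₁ t₂) : Disjoint (t₁.image fun l => -K - l - φ l) t₁ :=
  Finset.disjoint_left.2 <| Finset.forall_mem_image.2 fun l hl =>
    ht₁.neg_K_sub_sub_notMem hl (Finset.disjoint_right.1 hdisj (hφ l hl).1) (hφ l hl).2.1

theorem disjoint_image_right (hφ : IsIncidenceMap t₁ t₂ φ) (ht₂ : IsTritangent t₂)
    (hdisj : Disjoint t₁ t₂) : Disjoint (t₁.image fun l => -K - l - φ l) t₂ :=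
  Finset.disjoint_left.2 <| Finset.forall_mem_image.2 fun l hl => by
    rw [sub_right_comm]
    exact ht₂.neg_K_sub_sub_notMem (hφ l hl).1 (Finset.disjoint_left.1 hdisj hl)
      ((dot_comm _ _).trans (hφ l hl).2.1)

end IsIncidenceMap

end IncidenceMaps

theorem statement13 (t₁ t₂ : Finset (Fin 7 → ℤ))
    (h₁ : IsTritangent t₁) (h₂ : IsTritangent t₂) (hdisj : Disjoint t₁ t₂) :
    ∃ φ : (Fin 7 → ℤ) → (Fin 7 → ℤ),
      (∀ l ∈ t₁, φ l ∈ t₂ ∧ dot l (φ l) = 1 ∧ ∀ m ∈ t₂, m ≠ φ l → dot l m = 0) ∧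
      Set.BijOn φ ↑t₁ ↑t₂ ∧
      (∀ l ∈ t₁, IsLine (-K - l - φ l)) ∧
      IsTritangent (t₁.image fun l => -K - l - φ l) ∧
      Disjoint (t₁.image fun l => -K - l - φ l) t₁ ∧
      Disjoint (t₁.image fun l => -K - l - φ l) t₂ := by
  obtain ⟨φ, hφ⟩ := exists_isIncidenceMap h₁.2.1 h₂ hdisj
  obtain ⟨ψ, hψ⟩ := exists_isIncidenceMap h₂.2.1 h₁ hdisj.symm
  have hbij : Set.BijOn φ t₁ t₂ := hφ.bijOn hψ
  exact ⟨φ, hφ, hbij, fun l hl => hφ.isLine_neg_K_sub_sub h₁.2.1 h₂.2.1 hl,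
    hφ.isTritangent_image h₁ h₂ hbij, hφ.disjoint_image_left h₁ hdisj,
    hφ.disjoint_image_right h₂ hdisj⟩

end Stmt13
end
end
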